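/- The kernel of the restriction to V_n' of the quotient homomorphism U_n → PU_n = U_n/Z(U_n) is the cyclic subgroup of V_n' generated by the scalar matrix ζ·I, which has order n. In other words, there is a short exact sequence 1 → ℤ/n → V_n' → V_n → 1, where V_n is the image of V_n' in PU_n. -/

import Mathlib

/-!
The matrices satisfy `β' α' = ζ α' β'` and `α' ^ n = β' ^ n = 1`, and `s = ζ·I` is central of
order `n` because `ζ` is a primitive `n`-th root of unity. Hence `s` is the commutator of `β'` and
`α'`, so it lies in `V_n'`, and every element of `V_n'` has the form `α' ^ i β' ^ j s ^ k`
(`exists_normal_form`). Conjugating such an element by `α'` or `β'` multiplies it by `s ^ (-j)`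
or `s ^ i` respectively, so if it is central in `U_n` then `n` divides both `i` and `j`, and the element is
`s ^ k` (`mem_zpowers_of_commute`). The identification of the center of `U_n` with the scalar
matrices is not needed.
-/

open Matrix Complex

/-- `ζ = exp(2πi/n)`. -/
noncomputable def zetaC (n : ℕ) : ℂ := Complex.exp (2 * Real.pi * Complex.I / n)

/-- The cyclic permutation matrix `α'`, with `α'_{ij} = 1` iff `i ≡ j + 1 (mod n)`. -/
noncomputable def alphaM (n : ℕ) : Matrix (Fin n) (Fin n) ℂ :=
  fun i j => if (i : ℕ) = ((j : ℕ) + 1) % n then 1 else 0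

/-- The diagonal matrix `β' = diag(ζ, ζ², …, ζ^{n−1}, 1)`. -/
noncomputable def betaM (n : ℕ) : Matrix (Fin n) (Fin n) ℂ :=
  Matrix.diagonal fun i => zetaC n ^ ((i : ℕ) + 1)

/-- `α'` as an element of the unitary group. -/
noncomputable def aU (n : ℕ) (hA : alphaM n ∈ Matrix.unitaryGroup (Fin n) ℂ) :
    Matrix.unitaryGroup (Fin n) ℂ := ⟨alphaM n, hA⟩

/-- `β'` as an element of the unitary group. -/
noncomputable def bU (n : ℕ) (hB : betaM n ∈ Matrix.unitaryGroup (Fin n) ℂ) :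
    Matrix.unitaryGroup (Fin n) ℂ := ⟨betaM n, hB⟩

/-- The scalar matrix `ζ·I` as an element of the unitary group. -/
noncomputable def sU (n : ℕ)
    (hS : zetaC n • (1 : Matrix (Fin n) (Fin n) ℂ) ∈ Matrix.unitaryGroup (Fin n) ℂ) :
    Matrix.unitaryGroup (Fin n) ℂ := ⟨zetaC n • (1 : Matrix (Fin n) (Fin n) ℂ), hS⟩

/-- `V_n'`, the subgroup of `U_n` generated by `α'` and `β'`. -/
noncomputable def Vgrp (n : ℕ) (hA : alphaM n ∈ Matrix.unitaryGroup (Fin n) ℂ)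
    (hB : betaM n ∈ Matrix.unitaryGroup (Fin n) ℂ) :
    Subgroup (Matrix.unitaryGroup (Fin n) ℂ) :=
  Subgroup.closure {aU n hA, bU n hB}

/-- `W_n`, the subgroup of `U_n` generated by `β'` and the scalar matrix `ζ·I`. -/
noncomputable def Wgrp (n : ℕ) (hB : betaM n ∈ Matrix.unitaryGroup (Fin n) ℂ)
    (hS : zetaC n • (1 : Matrix (Fin n) (Fin n) ℂ) ∈ Matrix.unitaryGroup (Fin n) ℂ) :
    Subgroup (Matrix.unitaryGroup (Fin n) ℂ) :=
  Subgroup.closure {bU n hB, sU n hS}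

/-- A group generated by `a` and `b` with central commutator `s = b a b⁻¹ a⁻¹` consists of the
elements in normal form `a ^ i * b ^ j * s ^ k`. -/
lemma exists_normal_form {G : Type*} [Group G] {a b s : G} (hsa : Commute s a) (hsb : Commute s b)
    (hba : b * a = s * a * b) {v : G} (hv : v ∈ Subgroup.closure {a, b}) :
    ∃ i j k : ℤ, v = a ^ i * b ^ j * s ^ k := by
  have key : ∀ i : ℤ, b * a ^ i = s ^ i * a ^ i * b := fun i => by
    have h : SemiconjBy b (a ^ i) ((s * a) ^ i) := SemiconjBy.zpow_right hba i
    rw [hsa.mul_zpow] at h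
    exact h
  have key' : ∀ i : ℤ, b⁻¹ * a ^ i = s ^ (-i) * a ^ i * b⁻¹ := fun i => by
    have hs : b * s ^ (-i) = s ^ (-i) * b := ((hsb.zpow_left (-i)).symm).eq
    rw [inv_mul_eq_iff_eq_mul, ← mul_assoc, ← mul_assoc, hs, mul_assoc (s ^ (-i)), key]
    group
  have hsab : ∀ i j m : ℤ, Commute (s ^ m) (a ^ i * b ^ j) := fun i j m =>
    ((hsa.zpow_zpow m i).mul_right (hsb.zpow_zpow m j))
  induction hv using Subgroup.closure_induction_left with
  | one => exact ⟨0, 0, 0, by simp⟩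
  | mul_left x hx y hy ih =>
    obtain ⟨i, j, k, rfl⟩ := ih
    rcases hx with rfl | rfl
    · exact ⟨i + 1, j, k, by group⟩
    · refine ⟨i, j + 1, i + k, ?_⟩
      calc x * (a ^ i * x ^ j * s ^ k) = (x * a ^ i) * x ^ j * s ^ k := by group
        _ = s ^ i * (a ^ i * x ^ (j + 1)) * s ^ k := by rw [key]; group
        _ = _ := by rw [(hsab i (j + 1) i).eq]; group
  | inv_mul_cancel x hx y hy ih =>
    obtain ⟨i, j, k, rfl⟩ := ih
    rcases hx with rfl | rfl
    · exact ⟨i - 1, j, k, by group⟩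
    · refine ⟨i, j - 1, -i + k, ?_⟩
      calc x⁻¹ * (a ^ i * x ^ j * s ^ k) = (x⁻¹ * a ^ i) * x ^ j * s ^ k := by group
        _ = s ^ (-i) * (a ^ i * x ^ (j - 1)) * s ^ k := by rw [key']; group
        _ = _ := by rw [(hsab i (j - 1) (-i)).eq]; group

/-- If moreover `a ^ n = b ^ n = 1` and `s` has order `n`, an element `a ^ i * b ^ j * s ^ k` that
commutes with `a` has `n ∣ j`, and one that commutes with `b` has `n ∣ i`; so an element of the
group commuting with both generators is a power of `s`. -/
lemma mem_zpowers_of_commute {G : Type*} [Group G] {a b s : G} {n : ℕ} (hsa : Commute s a)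
    (hsb : Commute s b) (hba : b * a = s * a * b) (ha : a ^ n = 1) (hb : b ^ n = 1)
    (hs : orderOf s = n) {v : G} (hv : v ∈ Subgroup.closure {a, b})
    (hva : Commute v a) (hvb : Commute v b) : v ∈ Subgroup.zpowers s := by
  obtain ⟨i, j, k, rfl⟩ := exists_normal_form hsa hsb hba hv
  have zpow_eq_one : ∀ {x : G} {m : ℤ}, x ^ n = 1 → s ^ m = 1 → x ^ m = 1 := fun hx hm =>
    orderOf_dvd_iff_zpow_eq_one.mp <|
      (Int.natCast_dvd_natCast.mpr (orderOf_dvd_of_pow_eq_one hx)).trans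
        (hs ▸ orderOf_dvd_iff_zpow_eq_one.mpr hm)
  -- The factor `s ^ k` commutes with `a` and `b`, so it can be dropped.
  have hva' : Commute (a ^ i * b ^ j) a := by
    simpa using hva.mul_left (hsa.zpow_left (-k))
  have hvb' : Commute (a ^ i * b ^ j) b := by
    simpa using hvb.mul_left (hsb.zpow_left (-k))
  have hja : Commute (b ^ j) a := by
    simpa using ((Commute.refl a).zpow_left (-i)).mul_left hva'
  have hib : Commute (a ^ i) b := by
    simpa using hvb'.mul_left ((Commute.refl b).zpow_left (-j))
  have hi : s ^ i = 1 := by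
    have h : SemiconjBy b (a ^ i) ((s * a) ^ i) := SemiconjBy.zpow_right hba i
    rw [hsa.mul_zpow] at h
    have h2 : s ^ i * a ^ i * b = a ^ i * b := h.eq.symm.trans hib.eq.symm
    simpa using h2
  have hj : s ^ j = 1 := by
    have h0 : SemiconjBy a (s * b) b := by
      change a * (s * b) = b * a
      rw [hba, ← mul_assoc, hsa.eq]
    have h := h0.zpow_right j
    rw [hsb.mul_zpow] at h
    have h2 : a * (s ^ j * b ^ j) = a * b ^ j := h.eq.trans hja.eq
    simpa using h2
  exact ⟨k, by simp [zpow_eq_one ha hi, zpow_eq_one hb hj]⟩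

lemma zetaC_isPrimitiveRoot {n : ℕ} (hn : n ≠ 0) : IsPrimitiveRoot (zetaC n) n :=
  Complex.isPrimitiveRoot_exp n hn

lemma alphaM_pow_apply {n : ℕ} (k : ℕ) (i j : Fin n) :
    (alphaM n ^ k) i j = if (i : ℕ) = ((j : ℕ) + k) % n then 1 else 0 := by
  have hn : 0 < n := j.pos
  induction k generalizing i j with
  | zero => simp [Matrix.one_apply, Nat.mod_eq_of_lt j.isLt, Fin.ext_iff]
  | succ k ih =>
    rw [pow_succ, Matrix.mul_apply,
      Finset.sum_eq_single (⟨((j : ℕ) + 1) % n, Nat.mod_lt _ hn⟩ : Fin n)]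
    · rw [ih]
      simp [alphaM, add_assoc, add_comm 1 k]
    · intro b _ hb
      have : (b : ℕ) ≠ ((j : ℕ) + 1) % n := fun h => hb (Fin.ext h)
      simp [alphaM, this]
    · simp

lemma alphaM_pow_self (n : ℕ) : alphaM n ^ n = 1 := by
  ext i j
  simp [alphaM_pow_apply, Matrix.one_apply, Nat.mod_eq_of_lt j.isLt, Fin.ext_iff]

lemma betaM_pow_self {n : ℕ} (hn : n ≠ 0) : betaM n ^ n = 1 := by
  rw [betaM, Matrix.diagonal_pow, ← Matrix.diagonal_one]
  congr 1
  ext i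
  simp [pow_right_comm _ _ n, (zetaC_isPrimitiveRoot hn).pow_eq_one]

lemma betaM_mul_alphaM {n : ℕ} (hn : n ≠ 0) :
    betaM n * alphaM n = zetaC n • (1 : Matrix (Fin n) (Fin n) ℂ) * alphaM n * betaM n := by
  ext i j
  simp only [betaM, Matrix.diagonal_mul, Matrix.mul_diagonal, Matrix.smul_mul, Matrix.one_mul,
    Matrix.smul_apply, smul_eq_mul, alphaM]
  split_ifs with h
  · have hz : zetaC n ^ (((j : ℕ) + 1) % n) = zetaC n ^ ((j : ℕ) + 1) :=
      (pow_eq_pow_mod _ (zetaC_isPrimitiveRoot hn).pow_eq_one).symm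
    rw [pow_succ, h, hz]
    ring
  · simp

/-- the kernel of the restriction to `V_n'` of the quotient map
`U_n → PU_n = U_n/Z(U_n)` is the cyclic subgroup generated by the scalar matrix `ζ·I`,
which has order `n`; and the image of `V_n'` is `V_n`, the subgroup of `PU_n` generated by
the images `α`, `β`.  This is the short exact sequence `1 → ℤ/n → V_n' → V_n → 1`. -/
theorem ker_restriction_eq_zpowers_scalar (n : ℕ) (hn : 1 < n)
    (hA : alphaM n ∈ Matrix.unitaryGroup (Fin n) ℂ)
    (hB : betaM n ∈ Matrix.unitaryGroup (Fin n) ℂ)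
    (hS : zetaC n • (1 : Matrix (Fin n) (Fin n) ℂ) ∈ Matrix.unitaryGroup (Fin n) ℂ) :
    ∃ hsV : sU n hS ∈ Vgrp n hA hB,
      MonoidHom.ker
          ((QuotientGroup.mk' (Subgroup.center (Matrix.unitaryGroup (Fin n) ℂ))).comp
            (Vgrp n hA hB).subtype) =
        Subgroup.zpowers (⟨sU n hS, hsV⟩ : Vgrp n hA hB) ∧
      orderOf (⟨sU n hS, hsV⟩ : Vgrp n hA hB) = n ∧
      Subgroup.map (QuotientGroup.mk' (Subgroup.center (Matrix.unitaryGroup (Fin n) ℂ)))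
          (Vgrp n hA hB) =
        Subgroup.closure
          {QuotientGroup.mk' (Subgroup.center (Matrix.unitaryGroup (Fin n) ℂ)) (aU n hA),
           QuotientGroup.mk' (Subgroup.center (Matrix.unitaryGroup (Fin n) ℂ)) (bU n hB)} := by
  have hn0 : n ≠ 0 := by omega
  have hζ := zetaC_isPrimitiveRoot hn0
  have hcomm : ∀ u : Matrix.unitaryGroup (Fin n) ℂ, Commute (sU n hS) u := fun u =>
    Subtype.ext (by simp [sU])
  have hba : bU n hB * aU n hA = sU n hS * aU n hA * bU n hB :=
    Subtype.ext (betaM_mul_alphaM hn0)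
  have ha : aU n hA ^ n = 1 := Subtype.ext (by simpa [aU] using alphaM_pow_self n)
  have hb : bU n hB ^ n = 1 := Subtype.ext (by simpa [bU] using betaM_pow_self hn0)
  have hpow : ∀ k : ℕ, sU n hS ^ k = 1 ↔ zetaC n ^ k = 1 := fun k => by
    rw [Subtype.ext_iff]
    simp only [sU, SubmonoidClass.mk_pow, smul_pow, one_pow, OneMemClass.coe_one]
    constructor
    · intro h
      simpa using congrFun (congrFun h ⟨0, by omega⟩) ⟨0, by omega⟩
    · intro h
      rw [h, one_smul]
  have hs : orderOf (sU n hS) = n := (orderOf_eq_orderOf_iff.mpr hpow).trans hζ.eq_orderOf.symm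
  have haV : aU n hA ∈ Vgrp n hA hB := Subgroup.subset_closure (by simp)
  have hbV : bU n hB ∈ Vgrp n hA hB := Subgroup.subset_closure (by simp)
  have hsV : sU n hS ∈ Vgrp n hA hB := by
    have : sU n hS = bU n hB * aU n hA * (bU n hB)⁻¹ * (aU n hA)⁻¹ := by
      rw [hba]; group
    rw [this]
    exact mul_mem (mul_mem (mul_mem hbV haV) (inv_mem hbV)) (inv_mem haV)
  refine ⟨hsV, ?_, ?_, ?_⟩
  · apply le_antisymm
    · intro v hv
      have hvc : (v : Matrix.unitaryGroup (Fin n) ℂ) ∈ Subgroup.center _ := by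
        simpa [MonoidHom.mem_ker, QuotientGroup.eq_one_iff] using hv
      rw [Subgroup.mem_center_iff] at hvc
      obtain ⟨k, hk⟩ := mem_zpowers_of_commute (hcomm _) (hcomm _) hba ha hb hs v.2
        (hvc _).symm (hvc _).symm
      exact ⟨k, Subtype.ext hk⟩
    · rw [Subgroup.zpowers_le, MonoidHom.mem_ker]
      exact (QuotientGroup.eq_one_iff _).mpr
        (Subgroup.mem_center_iff.mpr fun u => (hcomm u).eq.symm)
  · rw [Subgroup.orderOf_mk, hs]
  · rw [Vgrp, MonoidHom.map_closure, Set.image_pair]
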